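/- arXiv:2501.11215 — 2 statements merged into one kernel-verified Lean document; each statement's English description precedes it below -/
import Mathlib

section
/- Let H₁ and H₂ be connected combinatorial hypermaps on disjoint flag sets, and let H₁ ∨ H₂ be their join at any chosen corners. Then the partial-dual Euler-genus polynomial is multiplicative: ∂ε_{H₁ ∨ H₂}(z) = ∂ε_{H₁}(z) · ∂ε_{H₂}(z). -/
open Classical

/-- A pre-hypermap on a set of flags `F`: three structure maps `θ₀, θ₁, θ₂`.
It is a genuine combinatorial hypermap when the three maps are
fixed-point-free involutions (see `PreHypermap.IsHypermap`). -/
structure PreHypermap (F : Type*) where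
  theta : Fin 3 → F → F

namespace PreHypermap

variable {F : Type*}

/-- `H` is a combinatorial hypermap: `θ₀, θ₁, θ₂` are fixed-point-free involutions. -/
def IsHypermap (H : PreHypermap F) : Prop :=
  ∀ i : Fin 3, Function.Involutive (H.theta i) ∧ ∀ x : F, H.theta i x ≠ x

/-- The equivalence relation on `F` generated by a set of functions `F → F`;
for a set of involutions, two flags are related iff they are in the same orbit
of the subgroup generated by those involutions. -/
def orbitRel (fs : Set (F → F)) : F → F → Prop :=
  Relation.EqvGen (fun x y => ∃ f ∈ fs, f x = y)

/-- The setoid of orbits of the subgroup generated by a set of involutions. -/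
def orbitSetoid (fs : Set (F → F)) : Setoid F :=
  Relation.EqvGen.setoid (fun x y => ∃ f ∈ fs, f x = y)

/-- The number of orbits on `F` of the subgroup generated by a set of involutions. -/
noncomputable def orbitCount (fs : Set (F → F)) : ℕ :=
  Nat.card (Quotient (orbitSetoid fs))

/-- `v H`: the number of vertices, i.e. orbits of `⟨θ₁, θ₂⟩`. -/
noncomputable def v (H : PreHypermap F) : ℕ := orbitCount {H.theta 1, H.theta 2}

/-- `e H`: the number of hyperedges, i.e. orbits of `⟨θ₀, θ₂⟩`. -/
noncomputable def e (H : PreHypermap F) : ℕ := orbitCount {H.theta 0, H.theta 2}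

/-- `f H`: the number of faces, i.e. orbits of `⟨θ₀, θ₁⟩`. -/
noncomputable def f (H : PreHypermap F) : ℕ := orbitCount {H.theta 0, H.theta 1}

/-- `c H`: the number of components, i.e. orbits of `⟨θ₀, θ₁, θ₂⟩`. -/
noncomputable def c (H : PreHypermap F) : ℕ :=
  orbitCount {H.theta 0, H.theta 1, H.theta 2}

/-- `H` is connected if it has exactly one component. -/
def Connected (H : PreHypermap F) : Prop := H.c = 1

/-- The Euler characteristic `χ(H) = v + e + f - |F|/2`. -/
noncomputable def chi (H : PreHypermap F) : ℤ :=
  (H.v : ℤ) + (H.e : ℤ) + (H.f : ℤ) - (Nat.card F : ℤ) / 2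

/-- The Euler genus `ε(H) = 2 c(H) - χ(H)`. -/
noncomputable def eulerGenus (H : PreHypermap F) : ℤ := 2 * (H.c : ℤ) - H.chi

/-- `H` is orientable: there is `o : F → {+1, -1}` with `o (θᵢ x) = - o x` for all `i, x`. -/
def Orientable (H : PreHypermap F) : Prop :=
  ∃ o : F → ℤ, (∀ x : F, o x = 1 ∨ o x = -1) ∧
    ∀ (i : Fin 3) (x : F), o (H.theta i x) = - o x

/-- The set `E(H)` of hyperedges of `H`, each hyperedge being its set of flags
(an orbit of `⟨θ₀, θ₂⟩`). -/
def edges (H : PreHypermap F) : Set (Set F) :=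
  {s : Set F | ∃ x : F, s = {y : F | orbitRel {H.theta 0, H.theta 2} x y}}

/-- The geometric dual `H* = (F, θ₂, θ₁, θ₀)`. -/
def dual (H : PreHypermap F) : PreHypermap F where
  theta := fun i => H.theta (2 - i)

/-- The partial dual of `H` with respect to a set `S` of flags (interchange `θ₀` and
`θ₂` on `S`); for `A ⊆ E(H)` the partial dual `H^A` is `H.pdual (⋃₀ A)`. -/
noncomputable def pdual (H : PreHypermap F) (S : Set F) : PreHypermap F where
  theta := fun i x =>
    if i = 1 then H.theta 1 x
    else if x ∈ S then H.theta (2 - i) x else H.theta i x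

/-- `f(A)` for `A ⊆ E(H)`: the number of orbits of `⟨θ₁, θ₂^A⟩` (which equals `v(H^A)`). -/
noncomputable def subf (H : PreHypermap F) (A : Set (Set F)) : ℕ :=
  (H.pdual (⋃₀ A)).v

/-- `c(A)` for `A ⊆ E(H)`: the number of orbits of the subgroup generated by `θ₁`, `θ₂`
and the permutation equal to `θ₀` on `S(A)` and the identity elsewhere. -/
noncomputable def subc (H : PreHypermap F) (A : Set (Set F)) : ℕ :=
  orbitCount {H.theta 1, H.theta 2, fun x => if x ∈ ⋃₀ A then H.theta 0 x else x}

/-- `χ(A) = v(A) + e(A) + f(A) - |S(A)|/2` for `A ⊆ E(H)`, where `v(A) = v(H)`,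
`e(A) = |A|`, `f(A) = v(H^A)` and `S(A) = ⋃₀ A`. -/
noncomputable def subchi (H : PreHypermap F) (A : Set (Set F)) : ℤ :=
  (H.v : ℤ) + (A.ncard : ℤ) + (H.subf A : ℤ) - ((⋃₀ A).ncard : ℤ) / 2

/-- `ε(A) = 2 c(A) - χ(A)` for `A ⊆ E(H)`. -/
noncomputable def subeps (H : PreHypermap F) (A : Set (Set F)) : ℤ :=
  2 * (H.subc A : ℤ) - H.subchi A

/-- The hyperedge set of `H` as a finset. -/
noncomputable def edgeFinset (H : PreHypermap F) [Fintype F] : Finset (Set F) :=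
  (Set.toFinite H.edges).toFinset

/-- The partial-dual Euler-genus polynomial `∂ε_H(z) = Σ_{A ⊆ E(H)} z^(ε(H^A))`. -/
noncomputable def pdPoly (H : PreHypermap F) [Fintype F] : Polynomial ℕ :=
  ∑ A ∈ H.edgeFinset.powerset,
    Polynomial.X ^ ((H.pdual (⋃₀ (A : Set (Set F)))).eulerGenus).toNat

/-- The partial-dual orientable-genus polynomial `∂Γ_H(z) = Σ_{A ⊆ E(H)} z^(ε(H^A)/2)`. -/
noncomputable def pdGammaPoly (H : PreHypermap F) [Fintype F] : Polynomial ℕ :=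
  ∑ A ∈ H.edgeFinset.powerset,
    Polynomial.X ^ (((H.pdual (⋃₀ (A : Set (Set F)))).eulerGenus) / 2).toNat

/-- The join `H₁ ∨ H₂` of two hypermaps on disjoint flag sets, joining the corner
`{x, θ₁ x}` of `H₁` to the corner `{y, θ₁′ y}` of `H₂`. -/
noncomputable def join {F₁ F₂ : Type*} (H₁ : PreHypermap F₁) (H₂ : PreHypermap F₂)
    (x : F₁) (y : F₂) : PreHypermap (F₁ ⊕ F₂) where
  theta := fun i z =>
    if i = 1 then
      if z = Sum.inl x then Sum.inr y
      else if z = Sum.inr y then Sum.inl x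
      else if z = Sum.inl (H₁.theta 1 x) then Sum.inr (H₂.theta 1 y)
      else if z = Sum.inr (H₂.theta 1 y) then Sum.inl (H₁.theta 1 x)
      else Sum.map (H₁.theta 1) (H₂.theta 1) z
    else Sum.map (H₁.theta i) (H₂.theta i) z

/-- The bar-amalgamation `H₁ ⊕ H₂` of two hypermaps on disjoint flag sets, with a new
connecting hyperedge `{p, q, p', q'} = Fin 4` meeting the corner `{x, θ₁ x}` of `H₁`
and the corner `{y, θ₁′ y}` of `H₂`. -/
noncomputable def bar {F₁ F₂ : Type*} (H₁ : PreHypermap F₁) (H₂ : PreHypermap F₂)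
    (x : F₁) (y : F₂) : PreHypermap ((F₁ ⊕ F₂) ⊕ Fin 4) where
  theta := fun i z =>
    if i = 0 then
      match z with
      | .inl (.inl a) => .inl (.inl (H₁.theta 0 a))
      | .inl (.inr b) => .inl (.inr (H₂.theta 0 b))
      | .inr k => .inr (Equiv.swap (0 : Fin 4) 2 (Equiv.swap (1 : Fin 4) 3 k))
    else if i = 2 then
      match z with
      | .inl (.inl a) => .inl (.inl (H₁.theta 2 a))
      | .inl (.inr b) => .inl (.inr (H₂.theta 2 b))
      | .inr k => .inr (Equiv.swap (0 : Fin 4) 1 (Equiv.swap (2 : Fin 4) 3 k))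
    else
      if z = .inl (.inl x) then .inr 0
      else if z = .inr 0 then .inl (.inl x)
      else if z = .inl (.inl (H₁.theta 1 x)) then .inr 1
      else if z = .inr 1 then .inl (.inl (H₁.theta 1 x))
      else if z = .inl (.inr y) then .inr 2
      else if z = .inr 2 then .inl (.inr y)
      else if z = .inl (.inr (H₂.theta 1 y)) then .inr 3
      else if z = .inr 3 then .inl (.inr (H₂.theta 1 y))
      else
        match z with
        | .inl (.inl a) => .inl (.inl (H₁.theta 1 a))
        | .inl (.inr b) => .inl (.inr (H₂.theta 1 b))
        | .inr k => .inr k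

end PreHypermap

/-! Over `𝔽₂`, the functions on the flags that are invariant under a set of involutions form a space
whose dimension is the number of orbits, which turns orbit counting into linear algebra.

The spaces of invariants of `θ₀`, `θ₁`, `θ₂` are isotropic for the standard bilinear form and have
dimension at least `|F| / 2`; comparing `(A₀ ⊓ A₁) ⊔ (A₀ ⊓ A₂)` with the orthogonal complement of
`A₀ ⊔ (A₁ ⊓ A₂)` then gives `χ ≤ 2c`, so the Euler genus is a genuine exponent.

A fixed-point-free involution forces an invariant function to have sum zero. Hence a function
invariant under `θ₁` away from one corner, and under some other `θᵢ` everywhere, takes equal values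
on that corner. So passing from the disjoint union to the join imposes exactly one linear condition,
`φ x = φ y`, on the invariants of any set of involutions containing `θ₁` and another one: `v`, `f`
and `c` each drop by one while `e` is unchanged, and the Euler genus is additive. Partial duality
commutes with the join, so summing over subsets of the hyperedges gives the product.
-/

open Module

theorem finrank_inf_add_le_of_isotropic {K V : Type*} [Field K] [AddCommGroup V] [Module K V]
    [FiniteDimensional K V] {B : LinearMap.BilinForm K V} (hB : B.Nondegenerate)
    {A₀ A₁ A₂ : Submodule K V} (h₀ : A₀ ≤ B.orthogonal A₀) (h₁ : A₁ ≤ B.orthogonal A₁)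
    (h₂ : A₂ ≤ B.orthogonal A₂) :
    finrank K ↥(A₀ ⊓ A₁) + finrank K ↥(A₀ ⊓ A₂) + finrank K ↥(A₁ ⊓ A₂) + finrank K A₀ ≤
      finrank K V + 2 * finrank K ↥(A₀ ⊓ A₁ ⊓ A₂) := by
  have orthogonal : A₀ ⊓ A₁ ⊔ A₀ ⊓ A₂ ≤ B.orthogonal (A₀ ⊔ A₁ ⊓ A₂) := by
    refine sup_le (fun u hu n hn ↦ ?_) (fun u hu n hn ↦ ?_) <;>
      obtain ⟨a, ha, b, hb, rfl⟩ := Submodule.mem_sup.1 hn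
    · simp [h₀ hu.1 a ha, h₁ hu.2 b hb.1]
    · simp [h₀ hu.1 a ha, h₂ hu.2 b hb.2]
  have finrank_sup_le := Submodule.finrank_mono orthogonal
  have sup_inf_left := Submodule.finrank_sup_add_finrank_inf_eq (A₀ ⊓ A₁) (A₀ ⊓ A₂)
  have sup_inf_right := Submodule.finrank_sup_add_finrank_inf_eq A₀ (A₁ ⊓ A₂)
  have sup_le := Submodule.finrank_le (A₀ ⊔ A₁ ⊓ A₂)
  rw [LinearMap.BilinForm.finrank_orthogonal hB] at finrank_sup_le
  rw [← inf_inf_distrib_left] at sup_inf_left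
  rw [inf_assoc]
  lia

theorem finrank_inf_ker_add_one {K V : Type*} [Field K] [AddCommGroup V] [Module K V]
    {W : Submodule K V} [FiniteDimensional K W] {l : Dual K V} {w : V} (hw : w ∈ W)
    (hlw : l w ≠ 0) : finrank K ↥(W ⊓ LinearMap.ker l) + 1 = finrank K W := by
  have restrict_ne_zero : l.domRestrict W ≠ 0 := fun h ↦ hlw (DFunLike.congr_fun h ⟨w, hw⟩)
  rw [← Dual.finrank_ker_add_one_of_ne_zero restrict_ne_zero, LinearMap.ker_domRestrict,
    ← Submodule.finrank_map_subtype_eq, Submodule.map_comap_subtype]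

theorem finrank_submodule_prod {K V W : Type*} [Field K] [AddCommGroup V] [Module K V]
    [AddCommGroup W] [Module K W] (P : Submodule K V) (Q : Submodule K W) [FiniteDimensional K P]
    [FiniteDimensional K Q] :
    finrank K (P.prod Q) = finrank K P + finrank K Q := by
  have injective : Function.Injective (P.subtype.prodMap Q.subtype) :=
    P.injective_subtype.prodMap Q.injective_subtype
  rw [← finrank_prod, ← LinearMap.finrank_range_of_inj injective, LinearMap.range_prodMap,
    P.range_subtype, Q.range_subtype]

theorem sum_eq_zero_of_involutive {α R : Type*} [Semiring R] [CharP R 2] {g : α → α}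
    (hg : g.Involutive) (hfix : ∀ a, g a ≠ a) {s : Finset α} (hs : ∀ a ∈ s, g a ∈ s)
    {φ : α → R} (hφ : ∀ a ∈ s, φ (g a) = φ a) : ∑ a ∈ s, φ a = 0 :=
  Finset.sum_involution (fun a _ ↦ g a)
    (fun a ha ↦ by rw [hφ a ha, CharTwo.add_self_eq_zero]) (fun a _ _ ↦ hfix a) hs
    (fun a _ ↦ hg a)

theorem even_natCard_of_involutive {α : Type*} [Finite α] {g : α → α} (hg : g.Involutive)
    (hfix : ∀ a, g a ≠ a) : Even (Nat.card α) := by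
  have := Fintype.ofFinite α
  rw [← ZMod.natCast_eq_zero_iff_even]
  simpa using sum_eq_zero_of_involutive hg hfix (s := Finset.univ) (φ := fun _ ↦ (1 : ZMod 2))
    (by simp) (by simp)

theorem apply_involutive_eq_of_forall_ne {α R : Type*} [Finite α] [Ring R] [CharP R 2]
    {g h : α → α} (hg : g.Involutive) (hgfix : ∀ a, g a ≠ a) (hh : h.Involutive)
    (hhfix : ∀ a, h a ≠ a) {φ : α → R} (hφh : ∀ a, φ (h a) = φ a) {x : α}
    (hφg : ∀ a, a ≠ x → a ≠ g x → φ (g a) = φ a) (a : α) : φ (g a) = φ a := by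
  have := Fintype.ofFinite α
  have sum_all : ∑ a, φ a = 0 := sum_eq_zero_of_involutive hh hhfix (by simp) (by simpa using hφh)
  have sum_off : ∑ a ∈ ({x, g x} : Finset α)ᶜ, φ a = 0 :=
    sum_eq_zero_of_involutive hg hgfix
      (by simp +contextual [hg.eq_iff, hg x]) (by simpa using hφg)
  have sum_corner : φ x + φ (g x) = 0 := by
    rw [← Finset.sum_pair (hgfix x).symm, ← sum_all, ← Finset.sum_add_sum_compl {x, g x} φ,
      sum_off, add_zero]
  have corner : φ (g x) = φ x := (CharTwo.add_eq_zero.1 sum_corner).symm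
  by_cases hx : a = x
  · rw [hx, corner]
  by_cases hgx : a = g x
  · rw [hgx, hg, corner]
  exact hφg a hx hgx

theorem sum_powerset_union {α M : Type*} [DecidableEq α] [AddCommMonoid M] {s t : Finset α}
    (h : Disjoint s t) (f : Finset α → M) :
    ∑ A ∈ (s ∪ t).powerset, f A = ∑ A ∈ s.powerset, ∑ B ∈ t.powerset, f (A ∪ B) := by
  rw [Finset.disjoint_left] at h
  rw [← Finset.sum_product']
  exact Finset.sum_nbij' (fun A ↦ (A ∩ s, A ∩ t)) (fun A ↦ A.1 ∪ A.2) (by grind) (by grind)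
    (by grind) (fun A _ ↦ Prod.ext (by grind) (by grind)) (fun A _ ↦ congrArg f (by grind))

theorem sum_powerset_image {α β M : Type*} [DecidableEq β] [AddCommMonoid M] {g : α → β}
    (hg : g.Injective) (s : Finset α) (f : Finset β → M) :
    ∑ A ∈ (s.image g).powerset, f A = ∑ A ∈ s.powerset, f (A.image g) := by
  rw [Finset.powerset_image, Finset.sum_image (Finset.image_injective hg).injOn]

namespace PreHypermap

section Invariants

variable {F : Type*}

/-- The `𝔽₂`-valued functions on the flags that are constant along each map in `fs`. They are the
functions on the set of orbits, so their dimension counts orbits. -/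
def invariants (fs : Set (F → F)) : Submodule (ZMod 2) (F → ZMod 2) where
  carrier := {φ | ∀ g ∈ fs, ∀ a, φ (g a) = φ a}
  add_mem' hφ hψ g hg a := by simp [hφ g hg a, hψ g hg a]
  zero_mem' _ _ _ := rfl
  smul_mem' k φ hφ g hg a := by simp [hφ g hg a]

theorem mem_invariants {fs : Set (F → F)} {φ : F → ZMod 2} :
    φ ∈ invariants fs ↔ ∀ g ∈ fs, ∀ a, φ (g a) = φ a :=
  Iff.rfl

theorem mem_invariants_singleton {g : F → F} {φ : F → ZMod 2} :
    φ ∈ invariants {g} ↔ ∀ a, φ (g a) = φ a := by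
  simp [mem_invariants]

theorem invariants_insert (g : F → F) (fs : Set (F → F)) :
    invariants (insert g fs) = invariants {g} ⊓ invariants fs := by
  ext φ
  simp [mem_invariants]

theorem apply_eq_of_orbitRel {fs : Set (F → F)} {φ : F → ZMod 2} (hφ : φ ∈ invariants fs)
    {a b : F} (h : orbitRel fs a b) : φ a = φ b := by
  induction h with
  | rel a b h =>
    obtain ⟨g, hg, rfl⟩ := h
    exact (hφ g hg a).symm
  | refl a => rfl
  | symm a b _ ih => exact ih.symm
  | trans a b c _ _ ihab ihbc => exact ihab.trans ihbc

theorem range_funLeft_mk_orbitSetoid (fs : Set (F → F)) :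
    LinearMap.range (LinearMap.funLeft (ZMod 2) (ZMod 2) (Quotient.mk (orbitSetoid fs))) =
      invariants fs := by
  ext φ
  constructor
  · rintro ⟨ψ, rfl⟩ g hg a
    exact congrArg ψ (Quotient.sound (.symm _ _ (.rel _ _ ⟨g, hg, rfl⟩)))
  · intro hφ
    exact ⟨Quotient.lift φ fun _ _ h ↦ apply_eq_of_orbitRel hφ h, rfl⟩

theorem finrank_invariants [Finite F] (fs : Set (F → F)) :
    finrank (ZMod 2) (invariants fs) = orbitCount fs := by
  have := Fintype.ofFinite (Quotient (orbitSetoid fs))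
  rw [← range_funLeft_mk_orbitSetoid, LinearMap.finrank_range_of_inj
    (LinearMap.funLeft_injective_of_surjective _ _ _ Quotient.mk_surjective),
    finrank_fintype_fun_eq_card, orbitCount, Nat.card_eq_fintype_card]

theorem orbitRel_iff_forall_mem_invariants {fs : Set (F → F)} {a b : F} :
    orbitRel fs a b ↔ ∀ φ ∈ invariants fs, φ a = φ b := by
  refine ⟨fun h φ hφ ↦ apply_eq_of_orbitRel hφ h, fun h ↦ ?_⟩
  let indicator : Quotient (orbitSetoid fs) → ZMod 2 := Pi.single (Quotient.mk _ b) 1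
  have indicator_eq : indicator (Quotient.mk _ a) = indicator (Quotient.mk _ b) :=
    h (indicator ∘ Quotient.mk _) (by rw [← range_funLeft_mk_orbitSetoid]; exact ⟨indicator, rfl⟩)
  have mk_eq : Quotient.mk (orbitSetoid fs) a = Quotient.mk (orbitSetoid fs) b := by
    by_contra hab
    simp [indicator, hab] at indicator_eq
  exact Quotient.exact mk_eq

theorem natCard_le_two_mul_finrank_invariants [Finite F] {g : F → F} (hg : g.Involutive) :
    Nat.card F ≤ 2 * finrank (ZMod 2) (invariants {g}) := by
  have := Fintype.ofFinite F
  let d : (F → ZMod 2) →ₗ[ZMod 2] F → ZMod 2 := LinearMap.funLeft _ _ g - LinearMap.id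
  have ker_d : LinearMap.ker d = invariants {g} := by
    ext φ
    simp [d, mem_invariants_singleton, funext_iff, sub_eq_zero, LinearMap.funLeft_apply]
  -- The coboundary `d` squares to zero because `2 = 0`, so its rank is at most its nullity.
  have range_le_ker : LinearMap.range d ≤ LinearMap.ker d := by
    rintro _ ⟨φ, rfl⟩
    rw [ker_d, mem_invariants_singleton]
    intro a
    simp [d, LinearMap.funLeft_apply, hg a, CharTwo.sub_eq_add, add_comm]
  have rank_nullity := d.finrank_range_add_finrank_ker
  have rank_le_nullity := Submodule.finrank_mono range_le_ker
  rw [finrank_fintype_fun_eq_card] at rank_nullity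
  rw [ker_d] at rank_nullity rank_le_nullity
  rw [Nat.card_eq_fintype_card]
  lia

theorem invariants_le_orthogonal [Fintype F] {g : F → F} (hg : g.Involutive)
    (hfix : ∀ a, g a ≠ a) : invariants {g} ≤
      (Matrix.toBilin' (1 : Matrix F F (ZMod 2))).orthogonal (invariants {g}) := by
  intro φ hφ ψ hψ
  rw [mem_invariants_singleton] at hφ hψ
  simpa [Matrix.toBilin'_apply', dotProduct] using
    sum_eq_zero_of_involutive hg hfix (s := Finset.univ) (φ := fun a ↦ ψ a * φ a) (by simp)
      (by simp [hφ, hψ])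

theorem eulerGenus_nonneg [Finite F] {H : PreHypermap F} (h : H.IsHypermap) :
    0 ≤ H.eulerGenus := by
  have := Fintype.ofFinite F
  have nondegenerate : (Matrix.toBilin' (1 : Matrix F F (ZMod 2))).Nondegenerate :=
    LinearMap.BilinForm.nondegenerate_toBilin'_of_det_ne_zero' _ (by simp)
  have isotropic (i : Fin 3) := invariants_le_orthogonal (h i).1 (h i).2
  have three_isotropic :=
    finrank_inf_add_le_of_isotropic nondegenerate (isotropic 0) (isotropic 1) (isotropic 2)
  have half := natCard_le_two_mul_finrank_invariants (h 0).1
  rw [inf_assoc, ← invariants_insert, ← invariants_insert, ← invariants_insert,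
    ← invariants_insert, finrank_fintype_fun_eq_card, ← Nat.card_eq_fintype_card]
    at three_isotropic
  simp only [finrank_invariants] at three_isotropic half
  simp only [eulerGenus, chi, v, e, f, c]
  lia

end Invariants

section Join

variable {F₁ F₂ : Type*} (H₁ : PreHypermap F₁) (H₂ : PreHypermap F₂) (x : F₁) (y : F₂)

/-- The disjoint union of two hypermaps; the join differs from it only in the middle involution,
on the two joined corners. -/
def disjSum : PreHypermap (F₁ ⊕ F₂) where
  theta i := Sum.map (H₁.theta i) (H₂.theta i)

theorem mem_invariants_disjSum {I : Set (Fin 3)} {φ : F₁ ⊕ F₂ → ZMod 2} :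
    φ ∈ invariants ((H₁.disjSum H₂).theta '' I) ↔
      φ ∘ Sum.inl ∈ invariants (H₁.theta '' I) ∧ φ ∘ Sum.inr ∈ invariants (H₂.theta '' I) := by
  simp only [mem_invariants, Set.forall_mem_image, disjSum, Sum.forall, Sum.map_inl, Sum.map_inr,
    Function.comp_apply, ← forall_and]

theorem orbitCount_disjSum [Finite F₁] [Finite F₂] (I : Set (Fin 3)) :
    orbitCount ((H₁.disjSum H₂).theta '' I) =
      orbitCount (H₁.theta '' I) + orbitCount (H₂.theta '' I) := by
  let restrict := LinearEquiv.sumArrowLequivProdArrow F₁ F₂ (ZMod 2) (ZMod 2)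
  have invariants_eq : (invariants ((H₁.disjSum H₂).theta '' I)).map restrict.toLinearMap =
      (invariants (H₁.theta '' I)).prod (invariants (H₂.theta '' I)) := by
    ext φ
    rw [Submodule.mem_map_equiv, mem_invariants_disjSum]
    rfl
  simp only [← finrank_invariants]
  rw [← finrank_submodule_prod, ← invariants_eq, LinearEquiv.finrank_map_eq]

theorem orbitRel_disjSum_inl_inl {I : Set (Fin 3)} {a b : F₁} :
    orbitRel ((H₁.disjSum H₂).theta '' I) (Sum.inl a) (Sum.inl b) ↔
      orbitRel (H₁.theta '' I) a b := by
  simp only [orbitRel_iff_forall_mem_invariants, mem_invariants_disjSum]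
  exact ⟨fun h φ hφ ↦ h (Sum.elim φ 0) ⟨hφ, Submodule.zero_mem _⟩, fun h φ hφ ↦ h _ hφ.1⟩

theorem orbitRel_disjSum_inr_inr {I : Set (Fin 3)} {a b : F₂} :
    orbitRel ((H₁.disjSum H₂).theta '' I) (Sum.inr a) (Sum.inr b) ↔
      orbitRel (H₂.theta '' I) a b := by
  simp only [orbitRel_iff_forall_mem_invariants, mem_invariants_disjSum]
  exact ⟨fun h φ hφ ↦ h (Sum.elim 0 φ) ⟨Submodule.zero_mem _, hφ⟩, fun h φ hφ ↦ h _ hφ.2⟩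

theorem sumElim_one_zero_mem_invariants_disjSum (I : Set (Fin 3)) :
    (Sum.elim 1 0 : F₁ ⊕ F₂ → ZMod 2) ∈ invariants ((H₁.disjSum H₂).theta '' I) :=
  (mem_invariants_disjSum H₁ H₂).2 ⟨fun _ _ _ ↦ rfl, fun _ _ _ ↦ rfl⟩

theorem not_orbitRel_disjSum_inl_inr {I : Set (Fin 3)} {a : F₁} {b : F₂} :
    ¬orbitRel ((H₁.disjSum H₂).theta '' I) (Sum.inl a) (Sum.inr b) := fun h ↦
  one_ne_zero (apply_eq_of_orbitRel (sumElim_one_zero_mem_invariants_disjSum H₁ H₂ I) h)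

theorem not_orbitRel_disjSum_inr_inl {I : Set (Fin 3)} {a : F₂} {b : F₁} :
    ¬orbitRel ((H₁.disjSum H₂).theta '' I) (Sum.inr a) (Sum.inl b) := fun h ↦
  not_orbitRel_disjSum_inl_inr H₁ H₂ (h.symm _ _)

theorem setOf_orbitRel_disjSum_inl (I : Set (Fin 3)) (a : F₁) :
    {z | orbitRel ((H₁.disjSum H₂).theta '' I) (Sum.inl a) z} =
      Sum.inl '' {b | orbitRel (H₁.theta '' I) a b} := by
  ext (b | b)
  · simp [orbitRel_disjSum_inl_inl]
  · simp [not_orbitRel_disjSum_inl_inr]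

theorem setOf_orbitRel_disjSum_inr (I : Set (Fin 3)) (a : F₂) :
    {z | orbitRel ((H₁.disjSum H₂).theta '' I) (Sum.inr a) z} =
      Sum.inr '' {b | orbitRel (H₂.theta '' I) a b} := by
  ext (b | b)
  · simp [not_orbitRel_disjSum_inr_inl]
  · simp [orbitRel_disjSum_inr_inr]

theorem edges_disjSum : (H₁.disjSum H₂).edges =
    Set.image Sum.inl '' H₁.edges ∪ Set.image Sum.inr '' H₂.edges := by
  ext s
  simp only [edges, ← Set.image_pair, Set.mem_ofPred_eq, Sum.exists, setOf_orbitRel_disjSum_inl,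
    setOf_orbitRel_disjSum_inr, Set.mem_union, Set.mem_image]
  grind

theorem theta_join_of_ne_one {i : Fin 3} (hi : i ≠ 1) :
    (join H₁ H₂ x y).theta i = (H₁.disjSum H₂).theta i := by
  simp [join, disjSum, hi]

theorem theta_one_join_inl_of_ne {a : F₁} (hx : a ≠ x) (hx' : a ≠ H₁.theta 1 x) :
    (join H₁ H₂ x y).theta 1 (Sum.inl a) = Sum.inl (H₁.theta 1 a) := by
  simp [join, hx, hx']

theorem theta_one_join_inr_of_ne {b : F₂} (hy : b ≠ y) (hy' : b ≠ H₂.theta 1 y) :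
    (join H₁ H₂ x y).theta 1 (Sum.inr b) = Sum.inr (H₂.theta 1 b) := by
  simp [join, hy, hy']

theorem edges_join : (join H₁ H₂ x y).edges =
    Set.image Sum.inl '' H₁.edges ∪ Set.image Sum.inr '' H₂.edges := by
  rw [← edges_disjSum, edges, edges, theta_join_of_ne_one _ _ _ _ (by decide),
    theta_join_of_ne_one _ _ _ _ (by decide)]

variable {H₁ H₂}

theorem apply_theta_one_join {φ : F₁ ⊕ F₂ → ZMod 2}
    (hφ : ∀ z, φ ((H₁.disjSum H₂).theta 1 z) = φ z) (hxy : φ (Sum.inl x) = φ (Sum.inr y))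
    (z : F₁ ⊕ F₂) : φ ((join H₁ H₂ x y).theta 1 z) = φ z := by
  have corner : φ (Sum.inl (H₁.theta 1 x)) = φ (Sum.inr (H₂.theta 1 y)) :=
    (hφ (Sum.inl x)).trans (hxy.trans (hφ (Sum.inr y)).symm)
  simp only [join, if_true]
  split_ifs with hx hy hx' hy'
  · rw [hx, hxy]
  · rw [hy, hxy]
  · rw [hx', corner]
  · rw [hy', corner]
  · exact hφ z

theorem apply_theta_one_disjSum [Finite F₁] [Finite F₂] (h₁ : H₁.IsHypermap) (h₂ : H₂.IsHypermap)
    {i : Fin 3} {φ : F₁ ⊕ F₂ → ZMod 2} (hφi : ∀ z, φ ((H₁.disjSum H₂).theta i z) = φ z)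
    (hφ : ∀ z, φ ((join H₁ H₂ x y).theta 1 z) = φ z) :
    ∀ z, φ ((H₁.disjSum H₂).theta 1 z) = φ z
  | .inl a => by
    refine apply_involutive_eq_of_forall_ne (φ := φ ∘ Sum.inl) (x := x) (h₁ 1).1 (h₁ 1).2 (h₁ i).1
      (h₁ i).2 (fun a ↦ hφi (.inl a)) (fun a hx hx' ↦ ?_) a
    simpa [theta_one_join_inl_of_ne H₁ H₂ x y hx hx'] using hφ (.inl a)
  | .inr b => by
    refine apply_involutive_eq_of_forall_ne (φ := φ ∘ Sum.inr) (x := y) (h₂ 1).1 (h₂ 1).2 (h₂ i).1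
      (h₂ i).2 (fun b ↦ hφi (.inr b)) (fun b hy hy' ↦ ?_) b
    simpa [theta_one_join_inr_of_ne H₁ H₂ x y hy hy'] using hφ (.inr b)

theorem invariants_join [Finite F₁] [Finite F₂] (h₁ : H₁.IsHypermap) (h₂ : H₂.IsHypermap)
    {I : Set (Fin 3)} (hI : 1 ∈ I) {i : Fin 3} (hi : i ∈ I) (hi1 : i ≠ 1) :
    invariants ((join H₁ H₂ x y).theta '' I) = invariants ((H₁.disjSum H₂).theta '' I) ⊓
      LinearMap.ker (LinearMap.proj (R := ZMod 2) (φ := fun _ : F₁ ⊕ F₂ ↦ ZMod 2) (Sum.inl x) -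
        LinearMap.proj (Sum.inr y)) := by
  ext φ
  simp only [Submodule.mem_inf, mem_invariants, Set.forall_mem_image, LinearMap.mem_ker,
    LinearMap.sub_apply, LinearMap.proj_apply, sub_eq_zero]
  constructor
  · intro hφ
    refine ⟨fun j hj ↦ ?_, ?_⟩
    · by_cases hj1 : j = 1
      · subst hj1
        exact apply_theta_one_disjSum x y h₁ h₂
          (theta_join_of_ne_one H₁ H₂ x y hi1 ▸ hφ hi) (hφ hI)
      · exact theta_join_of_ne_one H₁ H₂ x y hj1 ▸ hφ hj
    · simpa [join] using (hφ hI (Sum.inl x)).symm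
  · rintro ⟨hφ, hxy⟩ j hj
    by_cases hj1 : j = 1
    · subst hj1
      exact apply_theta_one_join x y (hφ hI) hxy
    · exact theta_join_of_ne_one H₁ H₂ x y hj1 ▸ hφ hj

theorem orbitCount_join_add_one [Finite F₁] [Finite F₂] (h₁ : H₁.IsHypermap)
    (h₂ : H₂.IsHypermap) {I : Set (Fin 3)} (hI : 1 ∈ I) {i : Fin 3} (hi : i ∈ I) (hi1 : i ≠ 1) :
    orbitCount ((join H₁ H₂ x y).theta '' I) + 1 =
      orbitCount (H₁.theta '' I) + orbitCount (H₂.theta '' I) := by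
  rw [← orbitCount_disjSum, ← finrank_invariants, ← finrank_invariants,
    invariants_join x y h₁ h₂ hI hi hi1,
    finrank_inf_ker_add_one (sumElim_one_zero_mem_invariants_disjSum H₁ H₂ I) (by simp)]

theorem v_join_add_one [Finite F₁] [Finite F₂] (h₁ : H₁.IsHypermap) (h₂ : H₂.IsHypermap) :
    (join H₁ H₂ x y).v + 1 = H₁.v + H₂.v := by
  simpa only [v, Set.image_pair] using
    orbitCount_join_add_one x y h₁ h₂ (I := {1, 2}) (i := 2) (by simp) (by simp) (by decide)

theorem f_join_add_one [Finite F₁] [Finite F₂] (h₁ : H₁.IsHypermap) (h₂ : H₂.IsHypermap) :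
    (join H₁ H₂ x y).f + 1 = H₁.f + H₂.f := by
  simpa only [f, Set.image_pair] using
    orbitCount_join_add_one x y h₁ h₂ (I := {0, 1}) (i := 0) (by simp) (by simp) (by decide)

theorem c_join_add_one [Finite F₁] [Finite F₂] (h₁ : H₁.IsHypermap) (h₂ : H₂.IsHypermap) :
    (join H₁ H₂ x y).c + 1 = H₁.c + H₂.c := by
  simpa only [c, Set.image_insert_eq, Set.image_singleton] using
    orbitCount_join_add_one x y h₁ h₂ (I := {0, 1, 2}) (i := 0) (by simp) (by simp) (by decide)

theorem e_join [Finite F₁] [Finite F₂] : (join H₁ H₂ x y).e = H₁.e + H₂.e := by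
  rw [e, theta_join_of_ne_one _ _ _ _ (by decide), theta_join_of_ne_one _ _ _ _ (by decide)]
  simpa only [e, Set.image_pair] using orbitCount_disjSum H₁ H₂ {0, 2}

theorem eulerGenus_join [Finite F₁] [Finite F₂] (h₁ : H₁.IsHypermap) (h₂ : H₂.IsHypermap) :
    (join H₁ H₂ x y).eulerGenus = H₁.eulerGenus + H₂.eulerGenus := by
  have hv := v_join_add_one x y h₁ h₂
  have he := e_join (H₁ := H₁) (H₂ := H₂) x y
  have hf := f_join_add_one x y h₁ h₂
  have hc := c_join_add_one x y h₁ h₂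
  obtain ⟨m, hm⟩ := even_natCard_of_involutive (h₁ 0).1 (h₁ 0).2
  obtain ⟨n, hn⟩ := even_natCard_of_involutive (h₂ 0).1 (h₂ 0).2
  rw [eulerGenus, eulerGenus, eulerGenus, chi, chi, chi, Nat.card_sum]
  lia

end Join

section PartialDual

variable {F F₁ F₂ : Type*}

theorem theta_mem_sUnion_edges {H : PreHypermap F} {A : Set (Set F)} (hA : A ⊆ H.edges)
    {i : Fin 3} (hi : i ≠ 1) {a : F} (ha : a ∈ ⋃₀ A) : H.theta i a ∈ ⋃₀ A := by
  obtain ⟨s, hs, has⟩ := ha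
  obtain ⟨z, rfl⟩ := hA hs
  have theta_mem : H.theta i ∈ ({H.theta 0, H.theta 2} : Set (F → F)) := by
    fin_cases i <;> simp_all
  exact ⟨_, hs, has.trans _ _ _ (.rel _ _ ⟨_, theta_mem, rfl⟩)⟩

theorem theta_mem_sUnion_edges_iff {H : PreHypermap F} (h : H.IsHypermap) {A : Set (Set F)}
    (hA : A ⊆ H.edges) {i : Fin 3} (hi : i ≠ 1) {a : F} :
    H.theta i a ∈ ⋃₀ A ↔ a ∈ ⋃₀ A :=
  ⟨fun ha ↦ (h i).1 a ▸ theta_mem_sUnion_edges hA hi ha, theta_mem_sUnion_edges hA hi⟩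

theorem two_sub_ne_one {i : Fin 3} (hi : i ≠ 1) : 2 - i ≠ 1 := by
  decide +revert

theorem IsHypermap.pdual {H : PreHypermap F} (h : H.IsHypermap) {A : Set (Set F)}
    (hA : A ⊆ H.edges) : (H.pdual (⋃₀ A)).IsHypermap := by
  intro i
  by_cases hi : i = 1
  · subst hi
    exact h 1
  have mem_iff (a : F) := theta_mem_sUnion_edges_iff h hA hi (a := a)
  have mem_iff' (a : F) := theta_mem_sUnion_edges_iff h hA (two_sub_ne_one hi) (a := a)
  refine ⟨fun a ↦ ?_, fun a ↦ ?_⟩ <;> by_cases ha : a ∈ ⋃₀ A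
  · simp only [PreHypermap.pdual, hi, ha, mem_iff', if_true, if_false, (h (2 - i)).1 a]
  · simp only [PreHypermap.pdual, hi, ha, mem_iff, if_false, (h i).1 a]
  · simpa only [PreHypermap.pdual, hi, ha, if_true, if_false] using (h (2 - i)).2 a
  · simpa only [PreHypermap.pdual, hi, ha, if_false] using (h i).2 a

theorem pdual_join (H₁ : PreHypermap F₁) (H₂ : PreHypermap F₂) (x : F₁) (y : F₂)
    (S : Set (F₁ ⊕ F₂)) : (join H₁ H₂ x y).pdual S =
      join (H₁.pdual (Sum.inl ⁻¹' S)) (H₂.pdual (Sum.inr ⁻¹' S)) x y := by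
  simp only [join, pdual, mk.injEq]
  funext i z
  by_cases hi : i = 1
  · simp [hi]
  · rcases z with a | b
    · by_cases ha : Sum.inl a ∈ S <;> simp [hi, two_sub_ne_one hi, ha]
    · by_cases hb : Sum.inr b ∈ S <;> simp [hi, two_sub_ne_one hi, hb]

theorem mem_edgeFinset [Fintype F] {H : PreHypermap F} {s : Set F} :
    s ∈ H.edgeFinset ↔ s ∈ H.edges := by
  simp [edgeFinset]

theorem nonempty_of_mem_edges {H : PreHypermap F} {s : Set F} (hs : s ∈ H.edges) :
    s.Nonempty := by
  obtain ⟨a, rfl⟩ := hs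
  exact ⟨a, .refl a⟩

theorem edgeFinset_join [Fintype F₁] [Fintype F₂] (H₁ : PreHypermap F₁) (H₂ : PreHypermap F₂)
    (x : F₁) (y : F₂) : (join H₁ H₂ x y).edgeFinset =
      H₁.edgeFinset.image (Set.image Sum.inl) ∪ H₂.edgeFinset.image (Set.image Sum.inr) := by
  ext s
  simp [mem_edgeFinset, edges_join]

theorem disjoint_image_inl_edgeFinset_image_inr [Fintype F₁] [Fintype F₂] (H₁ : PreHypermap F₁)
    (H₂ : PreHypermap F₂) : Disjoint (H₁.edgeFinset.image (Set.image (Sum.inl : F₁ → F₁ ⊕ F₂)))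
      (H₂.edgeFinset.image (Set.image Sum.inr)) := by
  simp only [Finset.disjoint_left, Finset.mem_image, not_exists, not_and]
  rintro _ ⟨s, hs, rfl⟩ t _ hts
  obtain ⟨a, ha⟩ := nonempty_of_mem_edges (mem_edgeFinset.1 hs)
  have : Sum.inl a ∈ Sum.inr '' t := hts ▸ Set.mem_image_of_mem _ ha
  simp at this

theorem eulerGenus_pdual_join [Finite F₁] [Finite F₂] {H₁ : PreHypermap F₁}
    {H₂ : PreHypermap F₂} (h₁ : H₁.IsHypermap) (h₂ : H₂.IsHypermap) (x : F₁) (y : F₂)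
    {A : Set (Set F₁)} (hA : A ⊆ H₁.edges) {B : Set (Set F₂)} (hB : B ⊆ H₂.edges) :
    ((join H₁ H₂ x y).pdual
        (⋃₀ (Set.image Sum.inl '' A ∪ Set.image Sum.inr '' B))).eulerGenus =
      (H₁.pdual (⋃₀ A)).eulerGenus + (H₂.pdual (⋃₀ B)).eulerGenus := by
  have preimage_inl : Sum.inl ⁻¹' ⋃₀ (Set.image Sum.inl '' A ∪ Set.image Sum.inr '' B) = ⋃₀ A := by
    ext a
    simp [or_and_right, exists_or]
  have preimage_inr : Sum.inr ⁻¹' ⋃₀ (Set.image Sum.inl '' A ∪ Set.image Sum.inr '' B) = ⋃₀ B := by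
    ext b
    simp [or_and_right, exists_or]
  rw [pdual_join, preimage_inl, preimage_inr, eulerGenus_join x y (h₁.pdual hA) (h₂.pdual hB)]

end PartialDual

end PreHypermap

open PreHypermap in
theorem statement_12_general {F₁ F₂ : Type*} [Fintype F₁] [Fintype F₂]
    {H₁ : PreHypermap F₁} {H₂ : PreHypermap F₂} (h₁ : H₁.IsHypermap) (h₂ : H₂.IsHypermap)
    (x : F₁) (y : F₂) : (join H₁ H₂ x y).pdPoly = H₁.pdPoly * H₂.pdPoly := by
  rw [pdPoly, pdPoly, pdPoly, edgeFinset_join,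
    sum_powerset_union (disjoint_image_inl_edgeFinset_image_inr H₁ H₂),
    sum_powerset_image (Set.image_injective.2 Sum.inl_injective), Finset.sum_mul_sum]
  refine Finset.sum_congr rfl fun A hA ↦ ?_
  rw [sum_powerset_image (Set.image_injective.2 Sum.inr_injective)]
  refine Finset.sum_congr rfl fun B hB ↦ ?_
  have hA' : ↑A ⊆ H₁.edges := fun s hs ↦ mem_edgeFinset.1 (Finset.mem_powerset.1 hA hs)
  have hB' : ↑B ⊆ H₂.edges := fun s hs ↦ mem_edgeFinset.1 (Finset.mem_powerset.1 hB hs)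
  rw [Finset.coe_union, Finset.coe_image, Finset.coe_image, eulerGenus_pdual_join h₁ h₂ x y hA' hB',
    Int.toNat_add (eulerGenus_nonneg (h₁.pdual hA')) (eulerGenus_nonneg (h₂.pdual hB')), pow_add]

open PreHypermap in
/-- The partial-dual Euler-genus polynomial is multiplicative under join:
`∂ε_(H₁ ∨ H₂)(z) = ∂ε_(H₁)(z) · ∂ε_(H₂)(z)`. -/
theorem statement_12 {F₁ F₂ : Type} [Fintype F₁] [Fintype F₂]
    (H₁ : PreHypermap F₁) (H₂ : PreHypermap F₂)
    (h₁ : H₁.IsHypermap) (h₂ : H₂.IsHypermap)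
    (hc₁ : H₁.Connected) (hc₂ : H₂.Connected) (x : F₁) (y : F₂) :
    (join H₁ H₂ x y).pdPoly = H₁.pdPoly * H₂.pdPoly := by
  exact statement_12_general h₁ h₂ x y
end

section
/- Let H₁ and H₂ be connected combinatorial hypermaps on disjoint flag sets, and let H₁ ⊕ H₂ be a bar-amalgamation of H₁ and H₂ (the connecting hyperedge meeting one corner of H₁ and one corner of H₂). Then H₁ ⊕ H₂ is connected, v(H₁ ⊕ H₂) = v(H₁) + v(H₂), e(H₁ ⊕ H₂) = e(H₁) + e(H₂) + 1, f(H₁ ⊕ H₂) = f(H₁) + f(H₂) − 1, χ(H₁ ⊕ H₂) = χ(H₁) + χ(H₂) − 2, and ε(H₁ ⊕ H₂) = ε(H₁) + ε(H₂). -/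
open Classical

/-!
The connecting hyperedge is attached to the disjoint union `H₁ ⊔ H₂` at four flags, one for each
of its own flags `p, q, p', q'`. Sending each new flag to its point of attachment identifies the
orbits of the amalgamation with those of `H₁ ⊔ H₂`, after joining `x` and `y` whenever `θ₀` is
among the generators. The join merges two orbits, so one face and one component are lost, while
the vertices just add up. Without `θ₁` the new hyperedge is an orbit of its own.

Attaching the hyperedge interrupts the `θ₁`-steps `x ↔ θ₁ x` and `y ↔ θ₁ y`, so it remains to see
that `x` and `θ₁ x` stay in one orbit. If `θ₂` is available they are joined through `p` and `q`.
Otherwise this is a parity argument: in a finite set, `θ₀` pairs up the flags of an orbit, and if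
`θ₁ x` were outside the orbit of `x`, then `θ₁` would pair up all of its flags except `x`.
-/

namespace PreHypermap

section Involutions

variable {F : Type*}

theorem even_card_of_involutive {σ : F → F} (hσ : Function.Involutive σ) (hne : ∀ a, σ a ≠ a)
    {S : Finset F} (hS : ∀ a ∈ S, σ a ∈ S) : Even S.card := by
  have hsum : ∑ _a ∈ S, (1 : ZMod 2) = 0 :=
    Finset.sum_involution (fun a _ => σ a) (fun _ _ => CharTwo.add_self_eq_zero 1)
      (fun a _ _ => hne a) hS (fun a _ => hσ a)
  rwa [Finset.sum_const, nsmul_one, ZMod.natCast_eq_zero_iff_even] at hsum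

theorem rel_apply_of_involutive [Finite F] (r : Setoid F) {σ τ : F → F}
    (hσ : Function.Involutive σ) (hσne : ∀ a, σ a ≠ a) (hσr : ∀ a, r a (σ a))
    (hτ : Function.Involutive τ) (hτne : ∀ a, τ a ≠ a) {x : F}
    (hτr : ∀ a, a ≠ x → a ≠ τ x → r a (τ a)) : r x (τ x) := by
  by_contra hx
  let S : Finset F := (Set.toFinite {a | r x a}).toFinset
  have mem_S {a : F} : a ∈ S ↔ r x a := Set.Finite.mem_toFinset _
  have heven : Even S.card :=
    even_card_of_involutive hσ hσne fun a ha => mem_S.2 (r.trans (mem_S.1 ha) (hσr a))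
  have heven_erase : Even (S.erase x).card := by
    refine even_card_of_involutive hτ hτne fun a ha => ?_
    obtain ⟨hax, haS⟩ := Finset.mem_erase.1 ha
    have haτx : a ≠ τ x := ne_of_mem_of_not_mem haS (mem_S.not.2 hx)
    exact Finset.mem_erase.2
      ⟨fun h => haτx (hτ.eq_iff.1 h), mem_S.2 (r.trans (mem_S.1 haS) (hτr a hax haτx))⟩
  rw [← Finset.card_erase_add_one (mem_S.2 (r.refl x)), Nat.even_add_one] at heven
  exact heven heven_erase

theorem IsHypermap.even_card [Finite F] {H : PreHypermap F} (h : H.IsHypermap) :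
    Even (Nat.card F) := by
  cases nonempty_fintype F
  rw [Nat.card_eq_fintype_card]
  exact even_card_of_involutive (h 0).1 (h 0).2 fun _ _ => Finset.mem_univ _

end Involutions

section Orbits

variable {F G ι : Type*} {fs : Set (F → F)} {gs : Set (G → G)} {a b c : F}

theorem orbitRel.refl (a : F) : orbitRel fs a a :=
  (orbitSetoid fs).refl a

theorem orbitRel.symm (h : orbitRel fs a b) : orbitRel fs b a :=
  (orbitSetoid fs).symm h

theorem orbitRel.trans (hab : orbitRel fs a b) (hbc : orbitRel fs b c) : orbitRel fs a c :=
  (orbitSetoid fs).trans hab hbc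

theorem orbitRel_apply {f : F → F} (hf : f ∈ fs) (a : F) : orbitRel fs a (f a) :=
  Relation.EqvGen.rel _ _ ⟨f, hf, rfl⟩

theorem orbitRel.rel_of_forall_apply (r : Setoid F) (hr : ∀ f ∈ fs, ∀ a, r a (f a))
    (h : orbitRel fs a b) : r a b := by
  refine Setoid.eqvGen_le ?_ h
  rintro a _ ⟨f, hf, rfl⟩
  exact hr f hf a

theorem orbitRel.map (i : F → G) (hi : ∀ f ∈ fs, ∀ a, orbitRel gs (i a) (i (f a)))
    (h : orbitRel fs a b) : orbitRel gs (i a) (i b) :=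
  h.rel_of_forall_apply ((orbitSetoid gs).comap i) hi

theorem orbitRel.mono {fs' : Set (F → F)} (hfs : fs ⊆ fs') (h : orbitRel fs a b) :
    orbitRel fs' a b :=
  h.map id fun _ hf => orbitRel_apply (hfs hf)

theorem orbitRel.eq_of_forall_apply {T : Type*} {g : F → T} (hg : ∀ f ∈ fs, ∀ a, g (f a) = g a)
    (h : orbitRel fs a b) : g a = g b :=
  h.rel_of_forall_apply (Setoid.ker g) fun f hf a => (hg f hf a).symm

theorem mk_apply_eq_mk {f : F → F} (hf : f ∈ fs) (a : F) :
    (⟦f a⟧ : Quotient (orbitSetoid fs)) = ⟦a⟧ :=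
  Quotient.sound (orbitRel_apply hf a).symm

theorem orbitCount_eq_card {T : Type*} {g : F → T} (hg : ∀ f ∈ fs, ∀ a, g (f a) = g a)
    (hsurj : Function.Surjective g) (hinj : ∀ a b, g a = g b → orbitRel fs a b) :
    orbitCount fs = Nat.card T := by
  have hker : orbitSetoid fs = Setoid.ker g :=
    Setoid.ext fun a b => ⟨orbitRel.eq_of_forall_apply hg, hinj a b⟩
  rw [orbitCount, hker]
  exact Nat.card_congr (Setoid.quotientKerEquivOfSurjective g hsurj)

theorem orbitCount_eq_one (a : F) (h : ∀ b, orbitRel fs a b) : orbitCount fs = 1 := by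
  rw [orbitCount_eq_card (g := fun _ => ()) (fun _ _ _ => rfl) (fun _ => ⟨a, rfl⟩)
    (fun b c _ => (h b).symm.trans (h c)), Nat.card_unique]

theorem orbitCount_congr (i : F → G) (r : G → F)
    (hi : ∀ f ∈ fs, ∀ a, orbitRel gs (i a) (i (f a)))
    (hr : ∀ g ∈ gs, ∀ z, orbitRel fs (r z) (r (g z)))
    (hri : Function.LeftInverse r i) (hir : ∀ z, orbitRel gs (i (r z)) z) :
    orbitCount gs = orbitCount fs := by
  refine orbitCount_eq_card (g := fun z => (⟦r z⟧ : Quotient (orbitSetoid fs))) ?_ ?_ ?_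
  · exact fun g hg z => Quotient.sound (hr g hg z).symm
  · exact Quotient.mk_surjective.comp hri.surjective
  · intro z w hzw
    have hrel : orbitRel fs (r z) (r w) := Quotient.exact hzw
    exact (hir z).symm.trans ((hrel.map i hi).trans (hir w))

theorem orbitCount_sumMap [Finite F] [Finite G] (α : ι → F → F) (β : ι → G → G) (I : Set ι) :
    orbitCount ((fun i => Sum.map (α i) (β i)) '' I) =
      orbitCount (α '' I) + orbitCount (β '' I) := by
  unfold orbitCount
  rw [← Nat.card_sum]
  refine orbitCount_eq_card (g := Sum.map Quotient.mk'' Quotient.mk'') ?_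
    (Quotient.mk_surjective.sumMap Quotient.mk_surjective) ?_
  · rintro _ ⟨i, hi, rfl⟩ (a | b)
    · exact congrArg Sum.inl (mk_apply_eq_mk (Set.mem_image_of_mem α hi) a)
    · exact congrArg Sum.inr (mk_apply_eq_mk (Set.mem_image_of_mem β hi) b)
  · rintro (a | b) (a' | b') h
    · refine orbitRel.map Sum.inl ?_ (Quotient.exact (Sum.inl_injective h))
      rintro _ ⟨i, hi, rfl⟩ a
      exact orbitRel_apply (Set.mem_image_of_mem _ hi) (Sum.inl a)
    · cases h
    · cases h
    · refine orbitRel.map Sum.inr ?_ (Quotient.exact (Sum.inr_injective h))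
      rintro _ ⟨i, hi, rfl⟩ b
      exact orbitRel_apply (Set.mem_image_of_mem _ hi) (Sum.inr b)

theorem rel_swap_apply [DecidableEq F] (r : Setoid F) (hab : r a b) (z : F) :
    r z (Equiv.swap a b z) := by
  by_cases hza : z = a
  · rwa [hza, Equiv.swap_apply_left]
  by_cases hzb : z = b
  · rw [hzb, Equiv.swap_apply_right]
    exact r.symm hab
  rw [Equiv.swap_apply_of_ne_of_ne hza hzb]

theorem orbitRel_insert_swap [DecidableEq F] (fs : Set (F → F)) (a b : F) :
    orbitRel (insert ⇑(Equiv.swap a b) fs) a b := by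
  simpa only [Equiv.swap_apply_left] using
    orbitRel_apply (Set.mem_insert (⇑(Equiv.swap a b)) fs) a

/-- Sends the orbit of `b` to the flag `a` and fixes all other flags. On orbits, it describes the
effect of merging the orbit of `b` into that of `a`. -/
noncomputable def redirect (fs : Set (F → F)) (a b z : F) : F :=
  if orbitRel fs z b then a else z

theorem redirect_of_orbitRel {z : F} (hz : orbitRel fs z b) : redirect fs a b z = a :=
  if_pos hz

theorem redirect_of_not_orbitRel {z : F} (hz : ¬ orbitRel fs z b) : redirect fs a b z = z :=
  if_neg hz

theorem not_orbitRel_redirect (hab : ¬ orbitRel fs a b) (z : F) :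
    ¬ orbitRel fs (redirect fs a b z) b := by
  by_cases hz : orbitRel fs z b
  · rwa [redirect_of_orbitRel hz]
  · rwa [redirect_of_not_orbitRel hz]

theorem orbitRel.redirect {z w : F} (h : orbitRel fs z w) :
    orbitRel fs (redirect fs a b z) (redirect fs a b w) := by
  by_cases hz : orbitRel fs z b
  · rw [redirect_of_orbitRel hz, redirect_of_orbitRel (h.symm.trans hz)]
    exact orbitRel.refl a
  · rwa [redirect_of_not_orbitRel hz, redirect_of_not_orbitRel fun hw => hz (h.trans hw)]

theorem orbitRel_insert_swap_redirect [DecidableEq F] (fs : Set (F → F)) (a b z : F) :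
    orbitRel (insert ⇑(Equiv.swap a b) fs) z (redirect fs a b z) := by
  by_cases hz : orbitRel fs z b
  · rw [redirect_of_orbitRel hz]
    exact (hz.mono (Set.subset_insert ..)).trans (orbitRel_insert_swap fs a b).symm
  · rw [redirect_of_not_orbitRel hz]
    exact orbitRel.refl z

theorem orbitCount_insert_swap_add_one [Finite F] [DecidableEq F] (hab : ¬ orbitRel fs a b) :
    orbitCount (insert ⇑(Equiv.swap a b) fs) + 1 = orbitCount fs := by
  let merge (z : F) : {q : Quotient (orbitSetoid fs) // q ≠ ⟦b⟧} :=
    ⟨⟦redirect fs a b z⟧, fun h => not_orbitRel_redirect hab z (Quotient.exact h)⟩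
  have merge_eq_iff {z w : F} :
      merge z = merge w ↔ orbitRel fs (redirect fs a b z) (redirect fs a b w) :=
    Subtype.ext_iff.trans Quotient.eq
  have merge_swap (z : F) : merge (Equiv.swap a b z) = merge z := by
    refine (rel_swap_apply (Setoid.ker merge) (merge_eq_iff.2 ?_) z).symm
    rw [redirect_of_not_orbitRel hab, redirect_of_orbitRel (orbitRel.refl b)]
    exact orbitRel.refl a
  have hcard : orbitCount (insert ⇑(Equiv.swap a b) fs) =
      Nat.card {q : Quotient (orbitSetoid fs) // q ≠ ⟦b⟧} := by
    refine orbitCount_eq_card (g := merge) ?_ ?_ ?_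
    · rintro f (rfl | hf) z
      · exact merge_swap z
      · exact merge_eq_iff.2 (orbitRel_apply hf z).symm.redirect
    · rintro ⟨q, hq⟩
      obtain ⟨z, rfl⟩ := q.exists_rep
      have hz : ¬ orbitRel fs z b := fun h => hq (Quotient.sound h)
      exact ⟨z, Subtype.ext (congrArg (Quotient.mk _) (redirect_of_not_orbitRel hz))⟩
    · intro z w hzw
      exact (orbitRel_insert_swap_redirect fs a b z).trans <|
        ((merge_eq_iff.1 hzw).mono (Set.subset_insert ..)).trans <|
          (orbitRel_insert_swap_redirect fs a b w).symm
  rw [hcard, ← Finite.card_option, orbitCount]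
  exact Nat.card_congr (Equiv.optionSubtypeNe _)

end Orbits

section OrbitCounts

variable {F : Type*} (H : PreHypermap F)

theorem v_eq_orbitCount_image : H.v = orbitCount (H.theta '' {1, 2}) := by
  rw [Set.image_pair, v]

theorem e_eq_orbitCount_image : H.e = orbitCount (H.theta '' {0, 2}) := by
  rw [Set.image_pair, e]

theorem f_eq_orbitCount_image : H.f = orbitCount (H.theta '' {0, 1}) := by
  rw [Set.image_pair, f]

theorem c_eq_orbitCount_image : H.c = orbitCount (H.theta '' {0, 1, 2}) := by
  rw [Set.image_insert_eq, Set.image_pair, c]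

end OrbitCounts

section Bar

variable {F₁ F₂ : Type*} (H₁ : PreHypermap F₁) (H₂ : PreHypermap F₂) (x : F₁) (y : F₂)

/-- The disjoint union `H₁ ⊔ H₂`, to which the connecting hyperedge of `bar` is attached. -/
def disjUnion : PreHypermap (F₁ ⊕ F₂) where
  theta i := Sum.map (H₁.theta i) (H₂.theta i)

/-- The action of `θ₀` and `θ₂` on the flags `p, q, p', q'` (numbered `0, 1, 2, 3`) of the
connecting hyperedge. The entry for `θ₁`, which leaves this hyperedge, is a placeholder. -/
def connectingTheta : Fin 3 → Fin 4 → Fin 4 :=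
  ![![2, 3, 0, 1], id, ![1, 0, 3, 2]]

/-- The flag of `H₁ ⊔ H₂` to which `θ₁` attaches each of the flags `p, q, p', q'`. -/
def attachment : Fin 4 → F₁ ⊕ F₂ :=
  ![.inl x, .inl (H₁.theta 1 x), .inr y, .inr (H₂.theta 1 y)]

/-- The retraction of the flags of `bar` onto those of `H₁ ⊔ H₂` that moves each flag of the
connecting hyperedge to its point of attachment. -/
def collapse : (F₁ ⊕ F₂) ⊕ Fin 4 → F₁ ⊕ F₂ :=
  Sum.elim id (attachment H₁ H₂ x y)

theorem bar_theta_of_ne_one {i : Fin 3} (hi : i ≠ 1) :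
    (bar H₁ H₂ x y).theta i = Sum.map ((disjUnion H₁ H₂).theta i) (connectingTheta i) := by
  funext z
  fin_cases i
  · rcases z with (a | b) | k
    · rfl
    · rfl
    · exact congrArg Sum.inr (by revert k; decide)
  · exact absurd rfl hi
  · rcases z with (a | b) | k
    · rfl
    · rfl
    · exact congrArg Sum.inr (by revert k; decide)

theorem bar_theta_one_inr (k : Fin 4) :
    (bar H₁ H₂ x y).theta 1 (.inr k) = .inl (attachment H₁ H₂ x y k) := by
  fin_cases k <;> simp [bar, attachment]

theorem bar_theta_one_inl {w : F₁ ⊕ F₂} (hw : w ∉ Set.range (attachment H₁ H₂ x y)) :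
    (bar H₁ H₂ x y).theta 1 (.inl w) = .inl ((disjUnion H₁ H₂).theta 1 w) := by
  have hne (k : Fin 4) : w ≠ attachment H₁ H₂ x y k := fun h => hw ⟨k, h.symm⟩
  have h0 := hne 0
  have h1 := hne 1
  have h2 := hne 2
  have h3 := hne 3
  rcases w with a | b <;> simp_all [bar, attachment, disjUnion]

theorem orbitCount_connectingTheta : orbitCount (connectingTheta '' {0, 2}) = 1 := by
  have step {i : Fin 3} (hi : i ∈ ({0, 2} : Set (Fin 3))) (k : Fin 4) :
      orbitRel (connectingTheta '' {0, 2}) k (connectingTheta i k) :=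
    orbitRel_apply (Set.mem_image_of_mem _ hi) k
  refine orbitCount_eq_one 0 fun k => ?_
  fin_cases k
  exacts [orbitRel.refl 0, step (.inr rfl) 0, step (.inl rfl) 0,
    (step (.inl rfl) 0).trans (step (.inr rfl) 2)]

theorem bar_e [Finite F₁] [Finite F₂] : (bar H₁ H₂ x y).e = H₁.e + H₂.e + 1 := by
  simp only [e_eq_orbitCount_image]
  have himage : (bar H₁ H₂ x y).theta '' {0, 2} =
      (fun i => Sum.map ((disjUnion H₁ H₂).theta i) (connectingTheta i)) '' {0, 2} := by
    refine Set.image_congr ?_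
    rintro i (rfl | rfl) <;> exact bar_theta_of_ne_one H₁ H₂ x y (by decide)
  rw [himage, orbitCount_sumMap, orbitCount_connectingTheta]
  exact congrArg (· + 1) (orbitCount_sumMap ..)

variable {I : Set (Fin 3)}

theorem orbitRel_bar_inl_of_ne_one {i : Fin 3} (hi : i ∈ I) (hi1 : i ≠ 1) (w : F₁ ⊕ F₂) :
    orbitRel ((bar H₁ H₂ x y).theta '' I) (.inl w) (.inl ((disjUnion H₁ H₂).theta i w)) := by
  simpa only [bar_theta_of_ne_one H₁ H₂ x y hi1, Sum.map_inl] using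
    orbitRel_apply (Set.mem_image_of_mem (bar H₁ H₂ x y).theta hi) (.inl w)

theorem orbitRel_bar_inr_of_ne_one {i : Fin 3} (hi : i ∈ I) (hi1 : i ≠ 1) (k : Fin 4) :
    orbitRel ((bar H₁ H₂ x y).theta '' I) (.inr k) (.inr (connectingTheta i k)) := by
  simpa only [bar_theta_of_ne_one H₁ H₂ x y hi1, Sum.map_inr] using
    orbitRel_apply (Set.mem_image_of_mem (bar H₁ H₂ x y).theta hi) (.inr k)

theorem orbitRel_bar_inr_inl_attachment (hI1 : 1 ∈ I) (k : Fin 4) :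
    orbitRel ((bar H₁ H₂ x y).theta '' I) (.inr k) (.inl (attachment H₁ H₂ x y k)) := by
  simpa only [bar_theta_one_inr] using
    orbitRel_apply (Set.mem_image_of_mem (bar H₁ H₂ x y).theta hI1) (.inr k)

theorem orbitRel_bar_attachment_of_two_mem (hI1 : 1 ∈ I) (hI2 : 2 ∈ I) (k : Fin 4) :
    orbitRel ((bar H₁ H₂ x y).theta '' I) (.inl (attachment H₁ H₂ x y k))
      (.inl (attachment H₁ H₂ x y (connectingTheta 2 k))) :=
  (orbitRel_bar_inr_inl_attachment H₁ H₂ x y hI1 k).symm.trans <|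
    (orbitRel_bar_inr_of_ne_one H₁ H₂ x y hI2 (by decide) k).trans <|
      orbitRel_bar_inr_inl_attachment H₁ H₂ x y hI1 _

theorem orbitRel_bar_inl_inr_of_zero_mem (hI0 : 0 ∈ I) (hI1 : 1 ∈ I) :
    orbitRel ((bar H₁ H₂ x y).theta '' I) (.inl (.inl x)) (.inl (.inr y)) :=
  (orbitRel_bar_inr_inl_attachment H₁ H₂ x y hI1 0).symm.trans <|
    (orbitRel_bar_inr_of_ne_one H₁ H₂ x y hI0 (by decide) 0).trans <|
      orbitRel_bar_inr_inl_attachment H₁ H₂ x y hI1 2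

variable {H₁ H₂}

theorem bar_theta_one_attachment (h₁ : H₁.IsHypermap) (h₂ : H₂.IsHypermap) (k : Fin 4) :
    (bar H₁ H₂ x y).theta 1 (.inl (attachment H₁ H₂ x y k)) = .inr k := by
  fin_cases k <;> simp [bar, attachment, (h₁ 1).2, (h₂ 1).2]

theorem disjUnion_theta_one_attachment (h₁ : H₁.IsHypermap) (h₂ : H₂.IsHypermap) (k : Fin 4) :
    (disjUnion H₁ H₂).theta 1 (attachment H₁ H₂ x y k) =
      attachment H₁ H₂ x y (connectingTheta 2 k) := by
  fin_cases k <;> simp [disjUnion, attachment, connectingTheta, (h₁ 1).1 x, (h₂ 1).1 y]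

theorem not_orbitRel_disjUnion_inl_inr :
    ¬ orbitRel ((disjUnion H₁ H₂).theta '' I) (.inl x) (.inr y) := by
  intro h
  have hleft : (Sum.inl x : F₁ ⊕ F₂).isLeft = (Sum.inr y : F₁ ⊕ F₂).isLeft := by
    refine h.eq_of_forall_apply (g := Sum.isLeft) ?_
    rintro _ ⟨i, _, rfl⟩ w
    exact Sum.isLeft_map ..
  exact Bool.noConfusion hleft

theorem orbitRel_bar_inl_of_notMem_range (hI1 : 1 ∈ I) {w : F₁ ⊕ F₂}
    (hw : w ∉ Set.range (attachment H₁ H₂ x y)) :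
    orbitRel ((bar H₁ H₂ x y).theta '' I) (.inl w) (.inl ((disjUnion H₁ H₂).theta 1 w)) := by
  simpa only [bar_theta_one_inl H₁ H₂ x y hw] using
    orbitRel_apply (Set.mem_image_of_mem (bar H₁ H₂ x y).theta hI1) (.inl w)

theorem orbitRel_bar_attachment_of_zero_mem [Finite F₁] [Finite F₂]
    (h₁ : H₁.IsHypermap) (h₂ : H₂.IsHypermap) (hI0 : 0 ∈ I) (hI1 : 1 ∈ I) (k : Fin 4) :
    orbitRel ((bar H₁ H₂ x y).theta '' I) (.inl (attachment H₁ H₂ x y k))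
      (.inl (attachment H₁ H₂ x y (connectingTheta 2 k))) := by
  have hx : orbitRel ((bar H₁ H₂ x y).theta '' I)
      (.inl (.inl x)) (.inl (.inl (H₁.theta 1 x))) := by
    refine rel_apply_of_involutive ((orbitSetoid _).comap (Sum.inl ∘ Sum.inl))
      (h₁ 0).1 (h₁ 0).2 (fun a => ?_) (h₁ 1).1 (h₁ 1).2 (fun a hax haθx => ?_)
    · exact orbitRel_bar_inl_of_ne_one H₁ H₂ x y hI0 (by decide) (.inl a)
    · refine orbitRel_bar_inl_of_notMem_range x y hI1 (w := .inl a) ?_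
      simp [attachment, Matrix.range_cons, hax, haθx]
  have hy : orbitRel ((bar H₁ H₂ x y).theta '' I)
      (.inl (.inr y)) (.inl (.inr (H₂.theta 1 y))) := by
    refine rel_apply_of_involutive ((orbitSetoid _).comap (Sum.inl ∘ Sum.inr))
      (h₂ 0).1 (h₂ 0).2 (fun b => ?_) (h₂ 1).1 (h₂ 1).2 (fun b hby hbθy => ?_)
    · exact orbitRel_bar_inl_of_ne_one H₁ H₂ x y hI0 (by decide) (.inr b)
    · refine orbitRel_bar_inl_of_notMem_range x y hI1 (w := .inr b) ?_
      simp [attachment, Matrix.range_cons, hby, hbθy]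
  fin_cases k
  exacts [hx, hx.symm, hy, hy.symm]

theorem orbitRel_bar_inl (h₁ : H₁.IsHypermap) (h₂ : H₂.IsHypermap)
    (hattach : ∀ k, orbitRel ((bar H₁ H₂ x y).theta '' I) (.inl (attachment H₁ H₂ x y k))
      (.inl (attachment H₁ H₂ x y (connectingTheta 2 k))))
    {i : Fin 3} (hi : i ∈ I) (w : F₁ ⊕ F₂) :
    orbitRel ((bar H₁ H₂ x y).theta '' I) (.inl w) (.inl ((disjUnion H₁ H₂).theta i w)) := by
  by_cases hi1 : i = 1
  · subst hi1
    by_cases hw : w ∈ Set.range (attachment H₁ H₂ x y)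
    · obtain ⟨k, rfl⟩ := hw
      rw [disjUnion_theta_one_attachment x y h₁ h₂]
      exact hattach k
    · exact orbitRel_bar_inl_of_notMem_range x y hi hw
  · exact orbitRel_bar_inl_of_ne_one H₁ H₂ x y hi hi1 w

theorem orbitRel_bar_inl_collapse (hI1 : 1 ∈ I) (z : (F₁ ⊕ F₂) ⊕ Fin 4) :
    orbitRel ((bar H₁ H₂ x y).theta '' I) (.inl (collapse H₁ H₂ x y z)) z := by
  rcases z with w | k
  · exact orbitRel.refl _
  · exact (orbitRel_bar_inr_inl_attachment H₁ H₂ x y hI1 k).symm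

theorem orbitRel_collapse_theta_one (h₁ : H₁.IsHypermap) (h₂ : H₂.IsHypermap)
    {gs : Set (F₁ ⊕ F₂ → F₁ ⊕ F₂)} (hgs : (disjUnion H₁ H₂).theta 1 ∈ gs)
    (z : (F₁ ⊕ F₂) ⊕ Fin 4) :
    orbitRel gs (collapse H₁ H₂ x y z)
      (collapse H₁ H₂ x y ((bar H₁ H₂ x y).theta 1 z)) := by
  rcases z with w | k
  · by_cases hw : w ∈ Set.range (attachment H₁ H₂ x y)
    · obtain ⟨k, rfl⟩ := hw
      rw [bar_theta_one_attachment x y h₁ h₂]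
      exact orbitRel.refl _
    · rw [bar_theta_one_inl H₁ H₂ x y hw]
      exact orbitRel_apply hgs w
  · rw [bar_theta_one_inr]
    exact orbitRel.refl _

theorem orbitRel_collapse_theta_of_ne_one {gs : Set (F₁ ⊕ F₂ → F₁ ⊕ F₂)} {i : Fin 3} (hi1 : i ≠ 1)
    (hgs : (disjUnion H₁ H₂).theta i ∈ gs)
    (hattach : ∀ k, orbitRel gs (attachment H₁ H₂ x y k)
      (attachment H₁ H₂ x y (connectingTheta i k)))
    (z : (F₁ ⊕ F₂) ⊕ Fin 4) :
    orbitRel gs (collapse H₁ H₂ x y z)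
      (collapse H₁ H₂ x y ((bar H₁ H₂ x y).theta i z)) := by
  rw [bar_theta_of_ne_one H₁ H₂ x y hi1]
  rcases z with w | k
  · exact orbitRel_apply hgs w
  · exact hattach k

theorem orbitRel_attachment_connectingTheta_two (h₁ : H₁.IsHypermap) (h₂ : H₂.IsHypermap)
    {gs : Set (F₁ ⊕ F₂ → F₁ ⊕ F₂)} (hgs : (disjUnion H₁ H₂).theta 1 ∈ gs) (k : Fin 4) :
    orbitRel gs (attachment H₁ H₂ x y k) (attachment H₁ H₂ x y (connectingTheta 2 k)) := by
  simpa only [disjUnion_theta_one_attachment x y h₁ h₂] using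
    orbitRel_apply hgs (attachment H₁ H₂ x y k)

theorem orbitRel_attachment_connectingTheta_zero
    {gs : Set (F₁ ⊕ F₂ → F₁ ⊕ F₂)} (hgs : (disjUnion H₁ H₂).theta 1 ∈ gs)
    (hxy : orbitRel gs (.inl x) (.inr y)) (k : Fin 4) :
    orbitRel gs (attachment H₁ H₂ x y k) (attachment H₁ H₂ x y (connectingTheta 0 k)) := by
  have hθ : orbitRel gs (.inl (H₁.theta 1 x)) (.inr (H₂.theta 1 y)) :=
    (orbitRel_apply hgs (.inl x)).symm.trans (hxy.trans (orbitRel_apply hgs (.inr y)))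
  fin_cases k
  exacts [hxy, hθ, hxy.symm, hθ.symm]

theorem orbitCount_bar_add_one [Finite F₁] [Finite F₂]
    (h₁ : H₁.IsHypermap) (h₂ : H₂.IsHypermap) (hI0 : 0 ∈ I) (hI1 : 1 ∈ I) :
    orbitCount ((bar H₁ H₂ x y).theta '' I) + 1 =
      orbitCount (H₁.theta '' I) + orbitCount (H₂.theta '' I) := by
  let gs : Set (F₁ ⊕ F₂ → F₁ ⊕ F₂) :=
    insert ⇑(Equiv.swap (Sum.inl x) (Sum.inr y)) ((disjUnion H₁ H₂).theta '' I)
  have mem_gs {i : Fin 3} (hi : i ∈ I) : (disjUnion H₁ H₂).theta i ∈ gs :=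
    Set.mem_insert_of_mem _ (Set.mem_image_of_mem _ hi)
  have hxy : orbitRel gs (.inl x) (.inr y) := orbitRel_insert_swap _ _ _
  have hattach := orbitRel_bar_attachment_of_zero_mem x y h₁ h₂ hI0 hI1
  have hbar : orbitCount ((bar H₁ H₂ x y).theta '' I) = orbitCount gs := by
    refine orbitCount_congr Sum.inl (collapse H₁ H₂ x y) ?_ ?_ (fun _ => rfl)
      (orbitRel_bar_inl_collapse x y hI1)
    · rintro _ (rfl | ⟨i, hi, rfl⟩) w
      · exact rel_swap_apply ((orbitSetoid _).comap Sum.inl)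
          (orbitRel_bar_inl_inr_of_zero_mem H₁ H₂ x y hI0 hI1) w
      · exact orbitRel_bar_inl x y h₁ h₂ hattach hi w
    · rintro _ ⟨i, hi, rfl⟩
      fin_cases i
      · exact orbitRel_collapse_theta_of_ne_one x y (by decide) (mem_gs hi)
          (orbitRel_attachment_connectingTheta_zero x y (mem_gs hI1) hxy)
      · exact orbitRel_collapse_theta_one x y h₁ h₂ (mem_gs hi)
      · exact orbitRel_collapse_theta_of_ne_one x y (by decide) (mem_gs hi)
          (orbitRel_attachment_connectingTheta_two x y h₁ h₂ (mem_gs hI1))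
  rw [hbar, orbitCount_insert_swap_add_one (not_orbitRel_disjUnion_inl_inr x y)]
  exact orbitCount_sumMap ..

theorem bar_v [Finite F₁] [Finite F₂] (h₁ : H₁.IsHypermap) (h₂ : H₂.IsHypermap) :
    (bar H₁ H₂ x y).v = H₁.v + H₂.v := by
  simp only [v_eq_orbitCount_image]
  have hI1 : (1 : Fin 3) ∈ ({1, 2} : Set (Fin 3)) := by simp
  have hI2 : (2 : Fin 3) ∈ ({1, 2} : Set (Fin 3)) := by simp
  have hbar : orbitCount ((bar H₁ H₂ x y).theta '' {1, 2}) =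
      orbitCount ((disjUnion H₁ H₂).theta '' {1, 2}) := by
    refine orbitCount_congr Sum.inl (collapse H₁ H₂ x y) ?_ ?_ (fun _ => rfl)
      (orbitRel_bar_inl_collapse x y hI1)
    · rintro _ ⟨i, hi, rfl⟩
      exact orbitRel_bar_inl x y h₁ h₂ (orbitRel_bar_attachment_of_two_mem H₁ H₂ x y hI1 hI2) hi
    · rintro _ ⟨i, rfl | rfl, rfl⟩
      · exact orbitRel_collapse_theta_one x y h₁ h₂ (Set.mem_image_of_mem _ hI1)
      · exact orbitRel_collapse_theta_of_ne_one x y (by decide) (Set.mem_image_of_mem _ hI2)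
          (orbitRel_attachment_connectingTheta_two x y h₁ h₂ (Set.mem_image_of_mem _ hI1))
  rw [hbar]
  exact orbitCount_sumMap ..

theorem bar_f_add_one [Finite F₁] [Finite F₂] (h₁ : H₁.IsHypermap) (h₂ : H₂.IsHypermap) :
    (bar H₁ H₂ x y).f + 1 = H₁.f + H₂.f := by
  simp only [f_eq_orbitCount_image]
  exact orbitCount_bar_add_one x y h₁ h₂ (by simp) (by simp)

theorem bar_c_add_one [Finite F₁] [Finite F₂] (h₁ : H₁.IsHypermap) (h₂ : H₂.IsHypermap) :
    (bar H₁ H₂ x y).c + 1 = H₁.c + H₂.c := by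
  simp only [c_eq_orbitCount_image]
  exact orbitCount_bar_add_one x y h₁ h₂ (by simp) (by simp)

theorem bar_chi [Finite F₁] [Finite F₂] (h₁ : H₁.IsHypermap) (h₂ : H₂.IsHypermap) :
    (bar H₁ H₂ x y).chi = H₁.chi + H₂.chi - 2 := by
  obtain ⟨m, hm⟩ := h₁.even_card
  obtain ⟨n, hn⟩ := h₂.even_card
  have hcard : Nat.card ((F₁ ⊕ F₂) ⊕ Fin 4) = (m + m) + (n + n) + 4 := by
    rw [Nat.card_sum, Nat.card_sum, hm, hn, Nat.card_fin]
  have hf := bar_f_add_one x y h₁ h₂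
  rw [chi, chi, chi, bar_v x y h₁ h₂, bar_e, hcard, hm, hn]
  omega

end Bar

end PreHypermap

open PreHypermap in
theorem statement_13_general {F₁ F₂ : Type*} [Finite F₁] [Finite F₂]
    (H₁ : PreHypermap F₁) (H₂ : PreHypermap F₂)
    (h₁ : H₁.IsHypermap) (h₂ : H₂.IsHypermap) (x : F₁) (y : F₂) :
    ((bar H₁ H₂ x y).c : ℤ) = (H₁.c : ℤ) + (H₂.c : ℤ) - 1 ∧
    (bar H₁ H₂ x y).v = H₁.v + H₂.v ∧
    (bar H₁ H₂ x y).e = H₁.e + H₂.e + 1 ∧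
    ((bar H₁ H₂ x y).f : ℤ) = (H₁.f : ℤ) + (H₂.f : ℤ) - 1 ∧
    (bar H₁ H₂ x y).chi = H₁.chi + H₂.chi - 2 ∧
    (bar H₁ H₂ x y).eulerGenus = H₁.eulerGenus + H₂.eulerGenus := by
  have hc := bar_c_add_one x y h₁ h₂
  have hf := bar_f_add_one x y h₁ h₂
  have hchi := bar_chi x y h₁ h₂
  refine ⟨by omega, bar_v x y h₁ h₂, bar_e H₁ H₂ x y, by omega, hchi, ?_⟩
  rw [eulerGenus, eulerGenus, eulerGenus, hchi]
  omega

open PreHypermap in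
/-- A bar-amalgamation of two connected hypermaps (the connecting hyperedge meeting one
corner of each) is connected, with `v = v₁ + v₂`, `e = e₁ + e₂ + 1`, `f = f₁ + f₂ - 1`,
`χ = χ₁ + χ₂ - 2` and `ε = ε₁ + ε₂`. -/
theorem statement_13 {F₁ F₂ : Type} [Fintype F₁] [Fintype F₂]
    (H₁ : PreHypermap F₁) (H₂ : PreHypermap F₂)
    (h₁ : H₁.IsHypermap) (h₂ : H₂.IsHypermap)
    (hc₁ : H₁.Connected) (hc₂ : H₂.Connected) (x : F₁) (y : F₂) :
    (bar H₁ H₂ x y).Connected ∧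
    (bar H₁ H₂ x y).v = H₁.v + H₂.v ∧
    (bar H₁ H₂ x y).e = H₁.e + H₂.e + 1 ∧
    ((bar H₁ H₂ x y).f : ℤ) = (H₁.f : ℤ) + (H₂.f : ℤ) - 1 ∧
    (bar H₁ H₂ x y).chi = H₁.chi + H₂.chi - 2 ∧
    (bar H₁ H₂ x y).eulerGenus = H₁.eulerGenus + H₂.eulerGenus := by
  obtain ⟨hc, hcounts⟩ := statement_13_general H₁ H₂ h₁ h₂ x y
  exact ⟨by unfold Connected at *; omega, hcounts⟩
end
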